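/- Let K be a compact subset of a real Banach space X and let δ ≥ 1 be a constant such that every n-dimensional subspace Y of X admits a linear isomorphism T : Y → ℓ_2^n with ‖T‖·‖T^{−1}‖ ≤ δ. Then the Kolmogorov n-width satisfies d_n(K) ≤ δ (n! V_n)^{1/n} ε_n(co(K)) for all n ≥ 1. -/

import Mathlib

open scoped RealInnerProductSpace

/-- Dyadic entropy number: infimum of all `ε > 0` such that `K` is covered by `2^n`
balls of radius `ε`. -/
noncomputable def entropyNumber {X : Type*} [NormedAddCommGroup X] (n : ℕ) (K : Set X) : ℝ :=
  sInf {ε : ℝ | 0 < ε ∧ ∃ c : Fin (2 ^ n) → X, K ⊆ ⋃ i, Metric.closedBall (c i) ε}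

/-- Symmetric (absolutely) convex hull: closure of the set of finite sums `∑ cᵢ gᵢ`
with `gᵢ ∈ K` and `∑ |cᵢ| ≤ 1`. -/
noncomputable def symConvexHull {X : Type*} [NormedAddCommGroup X] [NormedSpace ℝ X]
    (K : Set X) : Set X :=
  closure {x : X | ∃ (m : ℕ) (c : Fin m → ℝ) (g : Fin m → X),
    (∀ i, g i ∈ K) ∧ (∑ i, |c i|) ≤ 1 ∧ x = ∑ i, c i • g i}

/-- Volume of the unit Euclidean ball in `ℝⁿ`. -/
noncomputable def unitBallVol (n : ℕ) : ℝ :=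
  Real.pi ^ ((n : ℝ) / 2) / Real.Gamma ((n : ℝ) / 2 + 1)

/-- Span of the first `n` terms of a sequence. -/
noncomputable def spanFirst {X : Type*} [NormedAddCommGroup X] [NormedSpace ℝ X]
    (f : ℕ → X) (n : ℕ) : Submodule ℝ X :=
  Submodule.span ℝ (f '' {i | i < n})

/-- The weak greedy algorithm with parameter `γ`: `f n` (the `(n+1)`-st iterate) lies in `K`
and its distance to the span of the previous iterates is at least `γ` times that of any
other element of `K`. -/
def IsWeakGreedy {X : Type*} [NormedAddCommGroup X] [NormedSpace ℝ X]
    (γ : ℝ) (K : Set X) (f : ℕ → X) : Prop :=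
  ∀ n : ℕ, f n ∈ K ∧ ∀ g ∈ K,
    γ * Metric.infDist g (spanFirst f n : Set X) ≤ Metric.infDist (f n) (spanFirst f n : Set X)

/-- The greedy error `σ_n(K) = sup_{f ∈ K} dist(f, span{f_1,…,f_n})`. -/
noncomputable def greedyError {X : Type*} [NormedAddCommGroup X] [NormedSpace ℝ X]
    (K : Set X) (f : ℕ → X) (n : ℕ) : ℝ :=
  sSup ((fun g => Metric.infDist g (spanFirst f n : Set X)) '' K)

/-- Kolmogorov `n`-width. -/
noncomputable def kolmogorovWidth {X : Type*} [NormedAddCommGroup X] [NormedSpace ℝ X]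
    (n : ℕ) (K : Set X) : ℝ :=
  sInf {d : ℝ | ∃ Y : Submodule ℝ X, FiniteDimensional ℝ Y ∧ Module.finrank ℝ Y ≤ n ∧
    d = sSup ((fun g => Metric.infDist g (Y : Set X)) '' K)}

/-- `f` admits an `ℓ¹` representation over the dictionary `D`. -/
def HasL1Rep {X : Type*} [NormedAddCommGroup X] [NormedSpace ℝ X] (D : Set X) (f : X) : Prop :=
  ∃ (c : ℕ → ℝ) (g : ℕ → X), (∀ i, g i ∈ D) ∧ Summable (fun i => |c i|) ∧
    HasSum (fun i => c i • g i) f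

/-- The variation norm `‖f‖_{L₁(D)}`. -/
noncomputable def varNorm {X : Type*} [NormedAddCommGroup X] [NormedSpace ℝ X]
    (D : Set X) (f : X) : ℝ :=
  sInf {t : ℝ | ∃ (c : ℕ → ℝ) (g : ℕ → X), (∀ i, g i ∈ D) ∧ Summable (fun i => |c i|) ∧
    HasSum (fun i => c i • g i) f ∧ t = ∑' i, |c i|}

/-- The orthogonal greedy algorithm with target `f`: `fa 0 = 0`; at each step `g n ∈ D`
maximizes `|⟨g, f - fa n⟩|` over `D`, and `fa (n+1)` is the orthogonal projection of `f`
onto `span{g 0, …, g n}`. -/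
def IsOGA {X : Type*} [NormedAddCommGroup X] [InnerProductSpace ℝ X]
    (D : Set X) (f : X) (g fa : ℕ → X) : Prop :=
  fa 0 = 0 ∧ ∀ n : ℕ,
    g n ∈ D ∧ (∀ h ∈ D, |⟪h, f - fa n⟫| ≤ |⟪g n, f - fa n⟫|) ∧
    fa (n + 1) ∈ Submodule.span ℝ (g '' {i | i ≤ n}) ∧
    ∀ w ∈ Submodule.span ℝ (g '' {i | i ≤ n}), ⟪f - fa (n + 1), w⟫ = 0

/-- Best `n`-term approximation error `E_n(f, D)`. -/
noncomputable def bestNTermError {X : Type*} [NormedAddCommGroup X] [NormedSpace ℝ X]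
    (D : Set X) (n : ℕ) (f : X) : ℝ :=
  sInf {r : ℝ | ∃ (c : Fin n → ℝ) (g : Fin n → X), (∀ i, g i ∈ D) ∧ r = ‖f - ∑ i, c i • g i‖}

/-- The K-functional `K(t, g)` between `X` and `L₁(D)`. -/
noncomputable def Kfunctional {X : Type*} [NormedAddCommGroup X] [NormedSpace ℝ X]
    (D : Set X) (t : ℝ) (gg : X) : ℝ :=
  sInf {s : ℝ | ∃ h : X, HasL1Rep D h ∧ s = ‖gg - h‖ + t * varNorm D h}

/-- The interpolation norm `‖g‖_θ = sup_{t > 0} t^{-θ} K(t, g)`. -/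
noncomputable def interpNorm {X : Type*} [NormedAddCommGroup X] [NormedSpace ℝ X]
    (D : Set X) (θ : ℝ) (gg : X) : ℝ :=
  sSup ((fun t => t ^ (-θ) * Kfunctional D t gg) '' Set.Ioi (0 : ℝ))

/-! For `s < d_n(K)` one can choose `f₁, …, f_n ∈ K` one after another, each farther than `s` from
the span of its predecessors. Transport these vectors to `ℓ₂ⁿ` by `T`. There the absolute value of
their determinant is the product of the distances of the vectors to the span of their predecessors,
hence at least `(s / ‖T⁻¹‖) ^ n`, so the cross-polytope they span has volume at least
`(s / ‖T⁻¹‖) ^ n * 2 ^ n / n!`. It is the image under `T` of a subset of `co(K)`, so if `co(K)` is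
covered by `2 ^ n` balls of radius `ε`, then the images of their traces cover the cross-polytope.
These have diameter at most `2 * ‖T‖ * ε` but need not lie in Euclidean balls of half that diameter;
the isodiametric inequality still bounds their volumes by `V_n * (‖T‖ * ε) ^ n`. Comparing volumes
gives `s ≤ ‖T‖ * ‖T⁻¹‖ * (n! * V_n) ^ (1 / n) * ε`.

The isodiametric inequality is Brunn–Minkowski applied to a set and its reflection, and
Brunn–Minkowski is the case of indicator functions in the Prékopa–Leindler inequality.
-/

open MeasureTheory Measure Set
open scoped ENNReal NNReal Pointwise

/-! ### The Prékopa–Leindler inequality -/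

theorem volume_add_volume_le_volume_add_of_isCompact {A B : Set ℝ} (hA : IsCompact A)
    (hB : IsCompact B) (hA₀ : A.Nonempty) (hB₀ : B.Nonempty) :
    volume A + volume B ≤ volume (A + B) := by
  obtain ⟨M, hM, hMub⟩ := hA.exists_isGreatest hA₀
  obtain ⟨m, hm, hmlb⟩ := hB.exists_isLeast hB₀
  have hdisj : AEDisjoint volume (m +ᵥ A) (M +ᵥ B) := by
    refine measure_mono_null (t := {M + m}) ?_ (by simp)
    rintro _ ⟨⟨a, ha, rfl⟩, ⟨b, hb, hab⟩⟩
    simp only [vadd_eq_add] at hab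
    have := hMub ha
    have := hmlb hb
    simp only [vadd_eq_add, mem_singleton_iff]
    linarith
  calc volume A + volume B = volume ((m +ᵥ A) ∪ (M +ᵥ B)) := by
        rw [measure_union₀ (hB.measurableSet.const_vadd M).nullMeasurableSet hdisj,
          measure_vadd, measure_vadd]
    _ ≤ volume (A + B) := measure_mono <| union_subset
        (vadd_set_subset_iff.2 fun a ha => ⟨a, ha, m, hm, add_comm a m⟩)
        (vadd_set_subset_iff.2 fun b hb => ⟨M, hM, b, hb, rfl⟩)

theorem volume_add_volume_le_volume_add {A B : Set ℝ} (hA : MeasurableSet A)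
    (hB : MeasurableSet B) (hA₀ : A.Nonempty) (hB₀ : B.Nonempty) :
    volume A + volume B ≤ volume (A + B) := by
  obtain ⟨a, ha⟩ := hA₀
  obtain ⟨b, hb⟩ := hB₀
  rw [hA.measure_eq_iSup_isCompact, hB.measure_eq_iSup_isCompact]
  simp_rw [iSup_and']
  refine ENNReal.biSup_add_biSup_le' ⟨∅, by simp⟩ ⟨∅, by simp⟩ ?_
  rintro A' ⟨hA', hA'c⟩ B' ⟨hB', hB'c⟩
  calc volume A' + volume B' ≤ volume (insert a A') + volume (insert b B') := by
        gcongr <;> exact subset_insert _ _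
    _ ≤ volume (insert a A' + insert b B') := volume_add_volume_le_volume_add_of_isCompact
        (hA'c.insert a) (hB'c.insert b) (insert_nonempty _ _) (insert_nonempty _ _)
    _ ≤ volume (A + B) :=
        measure_mono (add_subset_add (insert_subset ha hA') (insert_subset hb hB'))

theorem lintegral_eq_lintegral_meas_ofReal_lt {α : Type*} [MeasurableSpace α] (μ : Measure α)
    [SFinite μ] {f : α → ℝ≥0∞} (hf : Measurable f) :
    ∫⁻ x, f x ∂μ = ∫⁻ u in Ioi (0 : ℝ), μ {x | ENNReal.ofReal u < f x} := by
  have volume_level (y : ℝ≥0∞) : volume.restrict (Ioi 0) {u | ENNReal.ofReal u < y} = y := by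
    rw [restrict_apply (measurableSet_lt ENNReal.measurable_ofReal measurable_const)]
    induction y with
    | top => simp
    | coe y =>
      have : {u | ENNReal.ofReal u < y} ∩ Ioi 0 = Ioo 0 (y : ℝ) := by
        ext u
        simp only [mem_inter_iff, mem_ofPred_eq, mem_Ioi, mem_Ioo, and_comm (b := 0 < u)]
        refine and_congr_right fun hu => ?_
        rw [ENNReal.ofReal_lt_iff_lt_toReal hu.le ENNReal.coe_ne_top, ENNReal.coe_toReal]
      simp [this]
  have hS : MeasurableSet {p : α × ℝ | ENNReal.ofReal p.2 < f p.1} :=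
    measurableSet_lt (ENNReal.measurable_ofReal.comp measurable_snd) (hf.comp measurable_fst)
  calc ∫⁻ x, f x ∂μ
      = ∫⁻ x, volume.restrict (Ioi 0) {u | ENNReal.ofReal u < f x} ∂μ := by
        simp_rw [volume_level]
    _ = (μ.prod (volume.restrict (Ioi 0))) {p | ENNReal.ofReal p.2 < f p.1} :=
        (prod_apply hS).symm
    _ = ∫⁻ u in Ioi (0 : ℝ), μ {x | ENNReal.ofReal u < f x} := prod_apply_symm hS

theorem ennreal_geom_mean_le_arith_mean2_weighted {s t : ℝ} (hs : 0 < s) (ht : 0 < t)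
    (hst : s + t = 1) (a b : ℝ≥0∞) :
    a ^ s * b ^ t ≤ ENNReal.ofReal s * a + ENNReal.ofReal t * b := by
  have h := ENNReal.young_inequality (a ^ s) (b ^ t) (Real.holderConjugate_one_div hs ht hst)
  simpa [← ENNReal.rpow_mul, hs.ne', ht.ne', ENNReal.ofReal_inv_of_pos, hs, ht, div_eq_mul_inv,
    mul_comm] using h

theorem lintegral_add_lintegral_le_of_iSup_eq_one {s t : ℝ} (hs : 0 < s) (ht : 0 < t)
    (hst : s + t = 1) {f g h : ℝ → ℝ≥0∞} (hf : Measurable f) (hg : Measurable g)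
    (hh : Measurable h) (hf₁ : ⨆ x, f x = 1) (hg₁ : ⨆ x, g x = 1)
    (H : ∀ x y, f x ^ s * g y ^ t ≤ h (s • x + t • y)) :
    ENNReal.ofReal s * (∫⁻ x, f x) + ENNReal.ofReal t * ∫⁻ x, g x ≤ ∫⁻ x, h x := by
  have measurable_level (f : ℝ → ℝ≥0∞) :
      Measurable fun u : ℝ => volume {x | ENNReal.ofReal u < f x} :=
    Antitone.measurable fun _ _ huv => measure_mono fun _ hx =>
      (ENNReal.ofReal_le_ofReal huv).trans_lt hx
  rw [lintegral_eq_lintegral_meas_ofReal_lt volume hf,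
    lintegral_eq_lintegral_meas_ofReal_lt volume hg,
    lintegral_eq_lintegral_meas_ofReal_lt volume hh, ← lintegral_const_mul _ (measurable_level f),
    ← lintegral_const_mul _ (measurable_level g),
    ← lintegral_add_left ((measurable_level f).const_mul _)]
  -- Below height `1` the superlevel sets of `f` and `g` are nonempty, so one-dimensional
  -- Brunn–Minkowski applies to them; from height `1` on they are empty.
  refine setLIntegral_mono' measurableSet_Ioi fun u (hu : 0 < u) => ?_
  set U := ENNReal.ofReal u
  rcases lt_or_ge U 1 with hU | hU
  · have hU₀ : U ≠ 0 := (ENNReal.ofReal_pos.2 hu).ne'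
    have hsub : s • {x | U < f x} + t • {x | U < g x} ⊆ {x | U < h x} := by
      rintro _ ⟨_, ⟨x, hx, rfl⟩, _, ⟨y, hy, rfl⟩, rfl⟩
      calc U = U ^ s * U ^ t := by
            rw [← ENNReal.rpow_add s t hU₀ ENNReal.ofReal_ne_top, hst, ENNReal.rpow_one]
        _ < f x ^ s * g y ^ t :=
            ENNReal.mul_lt_mul (ENNReal.rpow_lt_rpow hx hs) (ENNReal.rpow_lt_rpow hy ht)
        _ ≤ h (s • x + t • y) := H x y
    calc ENNReal.ofReal s * volume {x | U < f x} + ENNReal.ofReal t * volume {x | U < g x}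
        = volume (s • {x | U < f x}) + volume (t • {x | U < g x}) := by
          simp [abs_of_pos hs, abs_of_pos ht]
      _ ≤ volume (s • {x | U < f x} + t • {x | U < g x}) := volume_add_volume_le_volume_add
          ((measurableSet_lt measurable_const hf).const_smul_of_ne_zero hs.ne')
          ((measurableSet_lt measurable_const hg).const_smul_of_ne_zero ht.ne')
          (Set.Nonempty.smul_set (lt_iSup_iff.1 (hU.trans_eq hf₁.symm)))
          (Set.Nonempty.smul_set (lt_iSup_iff.1 (hU.trans_eq hg₁.symm)))
      _ ≤ volume {x | U < h x} := measure_mono hsub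
  · have level_eq_empty {f : ℝ → ℝ≥0∞} (hf₁ : ⨆ x, f x = 1) : {x | U < f x} = ∅ :=
      eq_empty_of_forall_notMem fun x hx => hx.not_ge (((le_iSup f x).trans_eq hf₁).trans hU)
    simp [level_eq_empty hf₁, level_eq_empty hg₁]

theorem rpow_lintegral_mul_rpow_lintegral_le_of_iSup_ne_top {s t : ℝ} (hs : 0 < s) (ht : 0 < t)
    (hst : s + t = 1) {f g h : ℝ → ℝ≥0∞} (hf : Measurable f) (hg : Measurable g)
    (hh : Measurable h) (hf_top : ⨆ x, f x ≠ ∞) (hg_top : ⨆ x, g x ≠ ∞)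
    (H : ∀ x y, f x ^ s * g y ^ t ≤ h (s • x + t • y)) :
    (∫⁻ x, f x) ^ s * (∫⁻ x, g x) ^ t ≤ ∫⁻ x, h x := by
  set F := ⨆ x, f x with hF
  set G := ⨆ x, g x with hG
  rcases eq_or_ne F 0 with hF₀ | hF₀
  · simp [ENNReal.iSup_eq_zero.1 hF₀, hs]
  rcases eq_or_ne G 0 with hG₀ | hG₀
  · simp [ENNReal.iSup_eq_zero.1 hG₀, ht]
  set C := F ^ s * G ^ t
  have hC₀ : C ≠ 0 := by simp [C, hF₀, hG₀, hs.le, ht.le]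
  have hC_top : C ≠ ∞ := by finiteness
  have div_rpow (a b : ℝ≥0∞) : (a / F) ^ s * (b / G) ^ t = a ^ s * b ^ t / C := by
    rw [ENNReal.div_rpow_of_nonneg _ _ hs.le, ENNReal.div_rpow_of_nonneg _ _ ht.le,
      ENNReal.mul_div_mul_comm (.inl (by simp [hF₀, hs.le])) (.inl (by finiteness))]
  have normalized := lintegral_add_lintegral_le_of_iSup_eq_one hs ht hst
    (hf.div_const F) (hg.div_const G) (hh.div_const C)
    (by rw [← ENNReal.iSup_div, ← hF, ENNReal.div_self hF₀ hf_top])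
    (by rw [← ENNReal.iSup_div, ← hG, ENNReal.div_self hG₀ hg_top])
    fun x y => (div_rpow _ _).trans_le (ENNReal.div_le_div_right (H x y) C)
  simp_rw [div_eq_mul_inv] at normalized
  rw [lintegral_mul_const _ hf, lintegral_mul_const _ hg, lintegral_mul_const _ hh] at normalized
  simp_rw [← div_eq_mul_inv] at normalized
  have hdiv : (∫⁻ x, f x) ^ s * (∫⁻ x, g x) ^ t / C ≤ (∫⁻ x, h x) / C :=
    (div_rpow _ _).symm.trans_le <|
      (ennreal_geom_mean_le_arith_mean2_weighted hs ht hst _ _).trans normalized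
  rwa [ENNReal.div_le_iff hC₀ hC_top, ENNReal.div_mul_cancel hC₀ hC_top] at hdiv

/-- The **Prékopa–Leindler inequality** as a property of a measure: for weights `s + t = 1`, the
integral is log-concave along `h (s • x + t • y) ≥ f x ^ s * g y ^ t`. Phrasing it as a property
makes it inheritable by products and linear images. -/
def PrekopaLeindler {E : Type*} [AddCommMonoid E] [Module ℝ E] [MeasurableSpace E]
    (μ : Measure E) : Prop :=
  ∀ ⦃s t : ℝ⦄, 0 < s → 0 < t → s + t = 1 → ∀ ⦃f g h : E → ℝ≥0∞⦄,
    Measurable f → Measurable g → Measurable h →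
    (∀ x y, f x ^ s * g y ^ t ≤ h (s • x + t • y)) →
    (∫⁻ x, f x ∂μ) ^ s * (∫⁻ x, g x ∂μ) ^ t ≤ ∫⁻ x, h x ∂μ

theorem prekopaLeindler_volume_real : PrekopaLeindler (volume : Measure ℝ) := by
  intro s t hs ht hst f g h hf hg hh H
  have truncation_mono (u : ℝ → ℝ≥0∞) : Monotone fun (k : ℕ) x => min (u x) k :=
    fun _ _ hij _ => min_le_min_left _ (by exact_mod_cast hij)
  have lintegral_truncation {u : ℝ → ℝ≥0∞} (hu : Measurable u) {p : ℝ} (hp : 0 < p) :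
      (∫⁻ x, u x) ^ p = ⨆ k : ℕ, (∫⁻ x, min (u x) k) ^ p := by
    have hsup (x : ℝ) : u x = ⨆ k : ℕ, min (u x) k := by
      rw [← inf_iSup_eq, ENNReal.iSup_natCast, inf_top_eq]
    conv_lhs => rw [lintegral_congr hsup]
    rw [lintegral_iSup (fun k => hu.min measurable_const) (truncation_mono u)]
    exact (ENNReal.orderIsoRpow p hp).map_iSup _
  have iSup_min_ne_top (u : ℝ → ℝ≥0∞) (k : ℕ) : ⨆ x, min (u x) k ≠ ∞ :=
    ne_top_of_le_ne_top (ENNReal.natCast_ne_top k) (iSup_le fun x => min_le_right _ _)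
  rw [lintegral_truncation hf hs, lintegral_truncation hg ht]
  simp_rw [ENNReal.iSup_mul, ENNReal.mul_iSup]
  refine iSup₂_le fun i j => ?_
  refine rpow_lintegral_mul_rpow_lintegral_le_of_iSup_ne_top hs ht hst (hf.min measurable_const)
    (hg.min measurable_const) hh (iSup_min_ne_top f i) (iSup_min_ne_top g j) fun x y => ?_
  calc min (f x) i ^ s * min (g y) j ^ t ≤ f x ^ s * g y ^ t := by
        gcongr <;> exact min_le_left _ _
    _ ≤ h (s • x + t • y) := H x y

namespace PrekopaLeindler

variable {E F : Type*} [AddCommMonoid E] [Module ℝ E] [MeasurableSpace E]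
  [AddCommMonoid F] [Module ℝ F] [MeasurableSpace F] {μ : Measure E} {ν : Measure F}

theorem dirac_zero : PrekopaLeindler (dirac (0 : E)) := by
  intro s t _ _ _ f g h hf hg hh H
  rw [lintegral_dirac' _ hf, lintegral_dirac' _ hg, lintegral_dirac' _ hh]
  simpa using H 0 0

theorem smul (hμ : PrekopaLeindler μ) (c : ℝ≥0∞) : PrekopaLeindler (c • μ) := by
  intro s t hs ht hst f g h hf hg hh H
  simp only [lintegral_smul_measure, smul_eq_mul]
  calc (c * ∫⁻ x, f x ∂μ) ^ s * (c * ∫⁻ x, g x ∂μ) ^ t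
      = c ^ s * c ^ t * ((∫⁻ x, f x ∂μ) ^ s * (∫⁻ x, g x ∂μ) ^ t) := by
        rw [ENNReal.mul_rpow_of_nonneg _ _ hs.le, ENNReal.mul_rpow_of_nonneg _ _ ht.le,
          mul_mul_mul_comm]
    _ = c * ((∫⁻ x, f x ∂μ) ^ s * (∫⁻ x, g x ∂μ) ^ t) := by
        rw [← ENNReal.rpow_add_of_nonneg s t hs.le ht.le, hst, ENNReal.rpow_one]
    _ ≤ c * ∫⁻ x, h x ∂μ := by gcongr; exact hμ hs ht hst hf hg hh H

theorem map (hμ : PrekopaLeindler μ) {L : E →ₗ[ℝ] F} (hL : Measurable L) :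
    PrekopaLeindler (μ.map L) := by
  intro s t hs ht hst f g h hf hg hh H
  rw [lintegral_map hf hL, lintegral_map hg hL, lintegral_map hh hL]
  exact hμ hs ht hst (hf.comp hL) (hg.comp hL) (hh.comp hL) fun x y => by
    simpa using H (L x) (L y)

theorem prod [SFinite ν] (hμ : PrekopaLeindler μ) (hν : PrekopaLeindler ν) :
    PrekopaLeindler (μ.prod ν) := by
  intro s t hs ht hst f g h hf hg hh H
  rw [lintegral_prod _ hf.aemeasurable, lintegral_prod _ hg.aemeasurable,
    lintegral_prod _ hh.aemeasurable]
  refine hμ hs ht hst hf.lintegral_prod_right' hg.lintegral_prod_right'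
    hh.lintegral_prod_right' fun x x' => ?_
  exact hν hs ht hst (hf.comp measurable_prodMk_left) (hg.comp measurable_prodMk_left)
    (hh.comp measurable_prodMk_left) fun y y' => H (x, y) (x', y')

end PrekopaLeindler

theorem prekopaLeindler_volume_pi (n : ℕ) : PrekopaLeindler (volume : Measure (Fin n → ℝ)) := by
  induction n with
  | zero =>
    rw [volume_pi_eq_dirac 0]
    exact .dirac_zero
  | succ n ih =>
    have cons_eq : ⇑(Fin.consEquivL ℝ fun _ : Fin (n + 1) => ℝ) =
        (MeasurableEquiv.piFinSuccAbove (fun _ : Fin (n + 1) => ℝ) 0).symm := by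
      funext x
      exact (Fin.insertNth_zero' x.1 x.2).symm
    have hcons : volume.map (Fin.consEquivL ℝ fun _ : Fin (n + 1) => ℝ) =
        (volume : Measure (Fin (n + 1) → ℝ)) := by
      rw [cons_eq]
      exact (volume_preserving_piFinSuccAbove (fun _ : Fin (n + 1) => ℝ) 0).symm.map_eq
    rw [← hcons]
    exact (prekopaLeindler_volume_real.prod ih).map
      (L := (Fin.consEquivL ℝ fun _ : Fin (n + 1) => ℝ).toLinearMap)
      (Fin.consEquivL ℝ fun _ : Fin (n + 1) => ℝ).continuous.measurable

/-! ### Brunn–Minkowski and isodiametric inequalities -/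

section AddHaar

variable {E : Type*} [NormedAddCommGroup E] [NormedSpace ℝ E] [FiniteDimensional ℝ E]
  [MeasurableSpace E] [BorelSpace E] (μ : Measure E) [μ.IsAddHaarMeasure]

theorem prekopaLeindler_addHaar : PrekopaLeindler μ := by
  have e : E ≃L[ℝ] (Fin (Module.finrank ℝ E) → ℝ) := ContinuousLinearEquiv.ofFinrankEq (by simp)
  have hvol : PrekopaLeindler (volume.map e.symm) :=
    (prekopaLeindler_volume_pi _).map (L := e.symm.toLinearMap) e.symm.continuous.measurable
  have : (volume.map e.symm).IsAddHaarMeasure := e.symm.isAddHaarMeasure_map volume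
  rw [isAddLeftInvariant_eq_smul μ (volume.map e.symm)]
  exact hvol.smul _

/-- The multiplicative form of the **Brunn–Minkowski inequality**. -/
theorem rpow_addHaar_mul_rpow_addHaar_le {s t : ℝ} (hs : 0 < s) (ht : 0 < t) (hst : s + t = 1)
    {A B : Set E} (hA : MeasurableSet A) (hB : MeasurableSet B) :
    μ A ^ s * μ B ^ t ≤ μ (s • A + t • B) := by
  set S := toMeasurable μ (s • A + t • B)
  have h := prekopaLeindler_addHaar μ hs ht hst (measurable_one.indicator hA)
    (measurable_one.indicator hB) (measurable_one.indicator (measurableSet_toMeasurable μ _))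
    (h := S.indicator 1) fun x y => by
      by_cases hxy : x ∈ A ∧ y ∈ B
      · have : s • x + t • y ∈ S := subset_toMeasurable _ _
          (add_mem_add (smul_mem_smul_set hxy.1) (smul_mem_smul_set hxy.2))
        simp [hxy.1, hxy.2, this]
      · rcases not_and_or.1 hxy with hx | hy
        · simp [hx, hs]
        · simp [hy, ht]
  rwa [lintegral_indicator_one hA, lintegral_indicator_one hB,
    lintegral_indicator_one (measurableSet_toMeasurable μ _), measure_toMeasurable] at h

/-- The **isodiametric inequality**. -/
theorem addHaar_le_addHaar_closedBall_diam_div_two {A : Set E} (hA : Bornology.IsBounded A) :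
    μ A ≤ μ (Metric.closedBall 0 (Metric.diam A / 2)) := by
  have hC : MeasurableSet (closure A) := isClosed_closure.measurableSet
  have hsub : (2⁻¹ : ℝ) • closure A + (2⁻¹ : ℝ) • -closure A ⊆
      Metric.closedBall 0 (Metric.diam A / 2) := by
    rintro _ ⟨_, ⟨x, hx, rfl⟩, _, ⟨y, hy, rfl⟩, rfl⟩
    have := Metric.dist_le_diam_of_mem hA.closure hx hy
    rw [dist_eq_norm, sub_eq_add_neg, neg_neg, Metric.diam_closure] at this
    rw [mem_closedBall_zero_iff]
    simp only [← smul_add, norm_smul]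
    norm_num
    linarith
  calc μ A ≤ μ (closure A) := measure_mono subset_closure
    _ = μ (closure A) ^ (2⁻¹ : ℝ) * μ (-closure A) ^ (2⁻¹ : ℝ) := by
      rw [measure_neg, ← ENNReal.rpow_add_of_nonneg _ _ (by norm_num) (by norm_num)]
      norm_num
    _ ≤ μ ((2⁻¹ : ℝ) • closure A + (2⁻¹ : ℝ) • -closure A) :=
      rpow_addHaar_mul_rpow_addHaar_le μ (by norm_num) (by norm_num) (by norm_num) hC hC.neg
    _ ≤ μ (Metric.closedBall 0 (Metric.diam A / 2)) := measure_mono hsub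

theorem addHaar_le_card_mul_addHaar_closedBall {X ι : Type*} [PseudoMetricSpace X] [Fintype ι]
    {a : ℝ≥0} {S : E → X} (hS : AntilipschitzWith a S) {C : Set E} {x : ι → X} {ε : ℝ}
    (hε : 0 ≤ ε) (hC : S '' C ⊆ ⋃ i, Metric.closedBall (x i) ε) :
    μ C ≤ Fintype.card ι * μ (Metric.closedBall 0 (a * ε)) := by
  have measure_preimage_le (i : ι) :
      μ (S ⁻¹' Metric.closedBall (x i) ε) ≤ μ (Metric.closedBall 0 (a * ε)) := by
    have hdiam : Metric.diam (S ⁻¹' Metric.closedBall (x i) ε) ≤ 2 * (a * ε) := by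
      refine Metric.diam_le_of_forall_dist_le (by positivity) fun y hy z hz => ?_
      calc dist y z ≤ a * dist (S y) (S z) := hS.le_mul_dist y z
        _ ≤ a * (ε + ε) := by
          gcongr
          exact (dist_triangle_right _ _ (x i)).trans (add_le_add hy hz)
        _ = 2 * (a * ε) := by ring
    refine (addHaar_le_addHaar_closedBall_diam_div_two μ
      (hS.isBounded_preimage Metric.isBounded_closedBall)).trans (measure_mono ?_)
    exact Metric.closedBall_subset_closedBall (by linarith)
  calc μ C ≤ μ (⋃ i, S ⁻¹' Metric.closedBall (x i) ε) := by
        rw [← preimage_iUnion]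
        exact measure_mono (image_subset_iff.1 hC)
    _ ≤ ∑ i, μ (S ⁻¹' Metric.closedBall (x i) ε) := measure_iUnion_fintype_le μ _
    _ ≤ ∑ _i : ι, μ (Metric.closedBall 0 (a * ε)) := Finset.sum_le_sum fun i _ =>
        measure_preimage_le i
    _ = Fintype.card ι * μ (Metric.closedBall 0 (a * ε)) := by simp

end AddHaar

/-! ### Determinants and distances to spans -/

section Determinant

variable {ι E : Type*} [NormedAddCommGroup E] [InnerProductSpace ℝ E]

theorem volume_image_linearCombination [Fintype ι] [DecidableEq ι] [FiniteDimensional ℝ E]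
    [MeasurableSpace E] [BorelSpace E] (b : OrthonormalBasis ι ℝ E) (v : ι → E) (A : Set (ι → ℝ)) :
    volume (Fintype.linearCombination ℝ v '' A) =
      ENNReal.ofReal |b.toBasis.det v| * volume A := by
  let coords : E ≃ᵐ (ι → ℝ) := b.measurableEquiv.trans (MeasurableEquiv.toLp 2 (ι → ℝ)).symm
  have coords_preserving : MeasurePreserving coords :=
    b.measurePreserving_measurableEquiv.trans (PiLp.volume_preserving_ofLp ι)
  have coords_linearCombination (c : ι → ℝ) :
      coords (Fintype.linearCombination ℝ v c) = Matrix.toLin' (b.toBasis.toMatrix v) c := by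
    change WithLp.ofLp (b.repr (Fintype.linearCombination ℝ v c)) = _
    ext j
    simp [Fintype.linearCombination_apply, Matrix.mulVec, dotProduct,
      Module.Basis.toMatrix_apply, mul_comm]
  rw [← coords.injective.preimage_image (Fintype.linearCombination ℝ v '' A),
    coords_preserving.measure_preimage_equiv, image_image]
  simp_rw [coords_linearCombination]
  rw [addHaar_image_linearMap, LinearMap.det_toLin', Module.Basis.det_apply]

variable [LinearOrder ι] [LocallyFiniteOrderBot ι] [WellFoundedLT ι]

theorem infDist_span_Iio_le_norm_gramSchmidt (v : ι → E) (i : ι) :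
    Metric.infDist (v i) (Submodule.span ℝ (v '' Iio i)) ≤
      ‖InnerProductSpace.gramSchmidt ℝ v i‖ := by
  have projection_mem : ∑ j ∈ Finset.Iio i, (ℝ ∙ InnerProductSpace.gramSchmidt ℝ v j).starProjection
      (v i) ∈ Submodule.span ℝ (v '' Iio i) := by
    rw [← InnerProductSpace.span_gramSchmidt_Iio ℝ v i]
    refine Submodule.sum_mem _ fun j hj => ?_
    refine Submodule.span_mono ?_ (Submodule.starProjection_apply_mem _ _)
    exact singleton_subset_iff.2 (mem_image_of_mem _ (Finset.mem_Iio.1 hj))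
  rw [InnerProductSpace.gramSchmidt_def, ← dist_eq_norm]
  exact Metric.infDist_le_dist_of_mem projection_mem

theorem norm_gramSchmidt_le_abs_inner [Fintype ι] [FiniteDimensional ℝ E]
    (h : Module.finrank ℝ E = Fintype.card ι) (v : ι → E) (i : ι) :
    ‖InnerProductSpace.gramSchmidt ℝ v i‖ ≤
      |⟪InnerProductSpace.gramSchmidtOrthonormalBasis h v i, v i⟫| := by
  rcases eq_or_ne (InnerProductSpace.gramSchmidt ℝ v i) 0 with hi | hi
  · simp [hi]
  have normed_ne : InnerProductSpace.gramSchmidtNormed ℝ v i ≠ 0 := by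
    simpa [InnerProductSpace.gramSchmidtNormed] using hi
  have inner_self : ⟪InnerProductSpace.gramSchmidt ℝ v i, v i⟫ =
      ‖InnerProductSpace.gramSchmidt ℝ v i‖ ^ 2 := by
    conv_lhs => rw [InnerProductSpace.gramSchmidt_def'' ℝ v i]
    rw [inner_add_right, inner_sum, Finset.sum_eq_zero, add_zero, real_inner_self_eq_norm_sq]
    intro j hj
    rw [inner_smul_right,
      InnerProductSpace.gramSchmidt_orthogonal ℝ v (Finset.mem_Iio.1 hj).ne', mul_zero]
  rw [InnerProductSpace.gramSchmidtOrthonormalBasis_apply _ normed_ne,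
    InnerProductSpace.gramSchmidtNormed, inner_smul_left, inner_self]
  simp [sq, hi]

theorem prod_infDist_span_Iio_le_abs_det [Fintype ι] [DecidableEq ι] [FiniteDimensional ℝ E]
    (h : Module.finrank ℝ E = Fintype.card ι) (v : ι → E) :
    ∏ i, Metric.infDist (v i) (Submodule.span ℝ (v '' Iio i)) ≤
      |(InnerProductSpace.gramSchmidtOrthonormalBasis h v).toBasis.det v| := by
  rw [InnerProductSpace.gramSchmidtOrthonormalBasis_det, Finset.abs_prod]
  exact Finset.prod_le_prod (fun _ _ => Metric.infDist_nonneg) fun i _ =>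
    (infDist_span_Iio_le_norm_gramSchmidt v i).trans (norm_gramSchmidt_le_abs_inner h v i)

end Determinant

theorem infDist_image_le_of_lipschitzWith {α β : Type*} [PseudoMetricSpace α] [PseudoMetricSpace β]
    {c : ℝ≥0} {f : α → β} (hf : LipschitzWith c f) (x : α) (A : Set α) :
    Metric.infDist (f x) (f '' A) ≤ c * Metric.infDist x A := by
  rcases A.eq_empty_or_nonempty with rfl | hA
  · simp
  have := hA.to_subtype
  rw [Metric.infDist_eq_iInf (x := x), Real.mul_iInf_of_nonneg c.coe_nonneg]
  exact le_ciInf fun y => (Metric.infDist_le_dist_of_mem (mem_image_of_mem f y.2)).trans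
    (hf.dist_le_mul x y)

theorem infDist_span_image_comp_le {ι E X : Type*} [NormedAddCommGroup E] [NormedSpace ℝ E]
    [NormedAddCommGroup X] [NormedSpace ℝ X] (S : E →L[ℝ] X) (v : ι → E) (i : ι) (A : Set ι) :
    Metric.infDist (S (v i)) (Submodule.span ℝ ((S ∘ v) '' A)) ≤
      ‖S‖ * Metric.infDist (v i) (Submodule.span ℝ (v '' A)) := by
  have := infDist_image_le_of_lipschitzWith S.lipschitz (v i) (Submodule.span ℝ (v '' A))
  rwa [image_comp, ← ContinuousLinearMap.coe_coe, Submodule.span_image, Submodule.map_coe]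

/-! ### Volumes of cross-polytopes -/

section CrossPolytope

/-- The **cross-polytope** spanned by finitely many vectors, i.e. their symmetric convex hull,
encoded as the image of the unit ball of `ℓ¹` under the linear combination map. -/
def crossPolytope {ι E : Type*} [Fintype ι] [AddCommMonoid E] [Module ℝ E] (v : ι → E) : Set E :=
  Fintype.linearCombination ℝ v '' {c | ∑ i, |c i| ≤ 1}

theorem image_crossPolytope {ι E F : Type*} [Fintype ι] [AddCommMonoid E] [Module ℝ E]
    [AddCommMonoid F] [Module ℝ F] (L : E →ₗ[ℝ] F) (v : ι → E) :
    L '' crossPolytope v = crossPolytope (L ∘ v) := by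
  rw [crossPolytope, crossPolytope, image_image]
  exact image_congr fun c _ => by simp [Fintype.linearCombination_apply]

theorem crossPolytope_subset_symConvexHull {X : Type*} [NormedAddCommGroup X] [NormedSpace ℝ X]
    {K : Set X} {n : ℕ} {f : Fin n → X} (hf : ∀ i, f i ∈ K) :
    crossPolytope f ⊆ symConvexHull K := by
  rintro _ ⟨c, hc, rfl⟩
  exact subset_closure ⟨n, c, f, hf, hc, Fintype.linearCombination_apply ..⟩

theorem volume_sum_abs_le_one {ι : Type*} [Fintype ι] [Nonempty ι] :
    volume {c : ι → ℝ | ∑ i, |c i| ≤ 1} =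
      ENNReal.ofReal (2 ^ Fintype.card ι / (Fintype.card ι).factorial) := by
  have h := volume_sum_rpow_le ι le_rfl 1
  norm_num at h
  simpa [Real.Gamma_nat_eq_factorial] using h

theorem volume_crossPolytope {ι E : Type*} [Fintype ι] [Nonempty ι] [DecidableEq ι]
    [NormedAddCommGroup E] [InnerProductSpace ℝ E] [FiniteDimensional ℝ E] [MeasurableSpace E]
    [BorelSpace E] (b : OrthonormalBasis ι ℝ E) (v : ι → E) :
    volume (crossPolytope v) = ENNReal.ofReal
      (|b.toBasis.det v| * (2 ^ Fintype.card ι / (Fintype.card ι).factorial)) := by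
  rw [crossPolytope, volume_image_linearCombination b, volume_sum_abs_le_one,
    ENNReal.ofReal_mul (abs_nonneg _)]

theorem unitBallVol_pos (n : ℕ) : 0 < unitBallVol n :=
  div_pos (Real.rpow_pos_of_pos Real.pi_pos _) (Real.Gamma_pos_of_pos (by positivity))

variable {E : Type*} [NormedAddCommGroup E] [InnerProductSpace ℝ E] [FiniteDimensional ℝ E]

theorem volume_closedBall_eq_unitBallVol [MeasurableSpace E] [BorelSpace E] [Nontrivial E] (x : E)
    {r : ℝ} (hr : 0 ≤ r) :
    volume (Metric.closedBall x r) =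
      ENNReal.ofReal (r ^ Module.finrank ℝ E * unitBallVol (Module.finrank ℝ E)) := by
  rw [InnerProductSpace.volume_closedBall, ENNReal.ofReal_mul (by positivity),
    ENNReal.ofReal_pow hr, unitBallVol, Real.sqrt_eq_rpow, ← Real.rpow_natCast,
    ← Real.rpow_mul Real.pi_nonneg, one_div_mul_eq_div]

theorem prod_infDist_le_of_image_crossPolytope_subset {X : Type*} [PseudoMetricSpace X] {n : ℕ}
    [NeZero n] (hE : Module.finrank ℝ E = n) {a : ℝ≥0} {S : E → X} (hS : AntilipschitzWith a S)
    {v : Fin n → E} {x : Fin (2 ^ n) → X} {ε : ℝ} (hε : 0 ≤ ε)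
    (hx : S '' crossPolytope v ⊆ ⋃ j, Metric.closedBall (x j) ε) :
    ∏ i, Metric.infDist (v i) (Submodule.span ℝ (v '' Iio i)) ≤
      n.factorial * unitBallVol n * (a * ε) ^ n := by
  borelize E
  have : Nontrivial E := Module.nontrivial_of_finrank_pos (R := ℝ) (hE ▸ NeZero.pos n)
  have hV := unitBallVol_pos n
  have hE' : Module.finrank ℝ E = Fintype.card (Fin n) := by rw [hE, Fintype.card_fin]
  have hdet := prod_infDist_span_Iio_le_abs_det hE' v
  set D := |(InnerProductSpace.gramSchmidtOrthonormalBasis hE' v).toBasis.det v| with hD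
  have hvol : ENNReal.ofReal (D * (2 ^ n / n.factorial)) ≤
      ENNReal.ofReal (2 ^ n * ((a * ε) ^ n * unitBallVol n)) := by
    have h := addHaar_le_card_mul_addHaar_closedBall volume hS hε hx
    rw [volume_crossPolytope (InnerProductSpace.gramSchmidtOrthonormalBasis hE' v),
      volume_closedBall_eq_unitBallVol 0 (by positivity), hE, ← hD] at h
    rw [ENNReal.ofReal_mul (p := 2 ^ n) (by positivity), ENNReal.ofReal_pow zero_le_two]
    simpa using h
  rw [ENNReal.ofReal_le_ofReal_iff (by positivity)] at hvol
  calc ∏ i, Metric.infDist (v i) (Submodule.span ℝ (v '' Iio i)) ≤ D := hdet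
    _ = D * (2 ^ n / n.factorial) * (n.factorial / 2 ^ n) := by field_simp
    _ ≤ 2 ^ n * ((a * ε) ^ n * unitBallVol n) * (n.factorial / 2 ^ n) := by gcongr
    _ = n.factorial * unitBallVol n * (a * ε) ^ n := by field_simp

theorem prod_infDist_le_of_crossPolytope_subset {X : Type*} [NormedAddCommGroup X]
    [NormedSpace ℝ X] {n : ℕ} [NeZero n] (hE : Module.finrank ℝ E = n) {Y : Submodule ℝ X}
    (T : Y ≃L[ℝ] E) {f : Fin n → X} (hf : ∀ i, f i ∈ Y) {x : Fin (2 ^ n) → X} {ε : ℝ}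
    (hε : 0 ≤ ε) (hx : crossPolytope f ⊆ ⋃ j, Metric.closedBall (x j) ε) :
    ∏ i, Metric.infDist (f i) (Submodule.span ℝ (f '' Iio i)) ≤
      n.factorial * unitBallVol n *
        (‖(T : Y →L[ℝ] E)‖ * ‖(T.symm : E →L[ℝ] Y)‖ * ε) ^ n := by
  set t := ‖(T : Y →L[ℝ] E)‖₊
  set t' := ‖(T.symm : E →L[ℝ] Y)‖
  set S : E →L[ℝ] X := Y.subtypeL ∘L T.symm
  set v : Fin n → E := fun i => T ⟨f i, hf i⟩
  have hSv : S ∘ v = f := by ext i; simp [S, v]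
  have S_antilipschitz : AntilipschitzWith t S := T.symm.antilipschitz
  have S_norm_le : ‖S‖ ≤ t' := ContinuousLinearMap.opNorm_le_bound _ (by positivity)
    (T.symm : E →L[ℝ] Y).le_opNorm
  calc ∏ i, Metric.infDist (f i) (Submodule.span ℝ (f '' Iio i))
      ≤ ∏ i, t' * Metric.infDist (v i) (Submodule.span ℝ (v '' Iio i)) := by
        refine Finset.prod_le_prod (fun _ _ => Metric.infDist_nonneg) fun i _ => ?_
        have h := infDist_span_image_comp_le S v i (Iio i)
        rw [hSv, show S (v i) = f i from congrFun hSv i] at h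
        exact h.trans (mul_le_mul_of_nonneg_right S_norm_le Metric.infDist_nonneg)
    _ = t' ^ n * ∏ i, Metric.infDist (v i) (Submodule.span ℝ (v '' Iio i)) := by
        simp [Finset.prod_mul_distrib]
    _ ≤ t' ^ n * (n.factorial * unitBallVol n * (t * ε) ^ n) := by
        gcongr
        refine prod_infDist_le_of_image_crossPolytope_subset hE S_antilipschitz (x := x) hε ?_
        rwa [← ContinuousLinearMap.coe_coe, image_crossPolytope, ContinuousLinearMap.coe_coe, hSv]
    _ = n.factorial * unitBallVol n * (t * t' * ε) ^ n := by ring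

end CrossPolytope

/-! ### Widths and entropy numbers -/

section Width

variable {X : Type*} [NormedAddCommGroup X] [NormedSpace ℝ X] {K : Set X}

theorem exists_lt_infDist_of_lt_kolmogorovWidth {s : ℝ} {n : ℕ} (hs₀ : 0 ≤ s)
    (hs : s < kolmogorovWidth n K) (Y : Submodule ℝ X) [FiniteDimensional ℝ Y]
    (hY : Module.finrank ℝ Y ≤ n) : ∃ g ∈ K, s < Metric.infDist g Y := by
  by_contra! h
  refine hs.not_ge (csInf_le_of_le ⟨0, ?_⟩ ⟨Y, inferInstance, hY, rfl⟩ ?_)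
  · rintro _ ⟨Z, -, -, rfl⟩
    exact Real.sSup_nonneg (forall_mem_image.2 fun _ _ => Metric.infDist_nonneg)
  · exact Real.sSup_le (forall_mem_image.2 h) hs₀

theorem exists_forall_lt_infDist_of_lt_kolmogorovWidth {s : ℝ} {n : ℕ} (hs₀ : 0 ≤ s)
    (hs : s < kolmogorovWidth n K) :
    ∃ f : Fin n → X, ∀ i, f i ∈ K ∧ s < Metric.infDist (f i) (Submodule.span ℝ (f '' Iio i)) := by
  obtain ⟨f, hf⟩ := seq_of_forall_finite_exists
    (P := fun g A => A.ncard ≤ n → g ∈ K ∧ s < Metric.infDist g (Submodule.span ℝ A))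
    fun A hA => by
      by_cases hAn : A.ncard ≤ n
      · have := FiniteDimensional.span_of_finite ℝ hA
        have := hA.fintype
        obtain ⟨g, hg⟩ := exists_lt_infDist_of_lt_kolmogorovWidth hs₀ hs (Submodule.span ℝ A)
          ((finrank_span_le_card A).trans (by rwa [← ncard_eq_toFinset_card']))
        exact ⟨g, fun _ => hg⟩
      · exact ⟨0, fun h => absurd h hAn⟩
  refine ⟨fun i => f i, fun i => ?_⟩
  rw [← Function.comp_def f, image_comp, Fin.image_val_Iio]
  refine hf i ?_
  calc (f '' Iio (i : ℕ)).ncard ≤ (Iio (i : ℕ)).ncard := ncard_image_le (finite_Iio _)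
    _ = i := by simp [ncard_eq_toFinset_card']
    _ ≤ n := i.2.le

theorem linearIndependent_of_forall_notMem_span_image_Iio {R M : Type*} [DivisionRing R]
    [AddCommGroup M] [Module R M] {n : ℕ} {f : Fin n → M}
    (hf : ∀ i, f i ∉ Submodule.span R (f '' Iio i)) : LinearIndependent R f := by
  induction n with
  | zero => exact linearIndependent_empty_type
  | succ n ih =>
    refine linearIndependent_finSucc'.2 ⟨ih fun i => ?_, ?_⟩
    · have := hf i.castSucc
      rwa [← Fin.image_castSucc_Iio, image_image] at this
    · have Iio_last : range Fin.castSucc = Iio (Fin.last n) := by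
        ext i
        rw [mem_range, Fin.exists_castSucc_eq, mem_Iio, Fin.lt_last_iff_ne_last]
      have := hf (Fin.last n)
      rwa [← Iio_last, ← range_comp] at this

theorem isBounded_symConvexHull (hK : Bornology.IsBounded K) :
    Bornology.IsBounded (symConvexHull K) := by
  obtain ⟨R, hR, hKR⟩ := hK.exists_pos_norm_le
  refine (Metric.isBounded_closedBall (x := 0) (r := R)).subset ?_
  refine closure_minimal ?_ Metric.isClosed_closedBall
  rintro _ ⟨m, c, g, hg, hc, rfl⟩
  rw [mem_closedBall_zero_iff]
  calc ‖∑ i, c i • g i‖ ≤ ∑ i, |c i| * R := norm_sum_le_of_le _ fun i _ => by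
        rw [norm_smul, Real.norm_eq_abs]
        exact mul_le_mul_of_nonneg_left (hKR _ (hg i)) (abs_nonneg _)
    _ = (∑ i, |c i|) * R := (Finset.sum_mul _ _ _).symm
    _ ≤ R := mul_le_of_le_one_left hR.le hc

end Width

theorem entropyNumber_nonneg {X : Type*} [NormedAddCommGroup X] (n : ℕ) (A : Set X) :
    0 ≤ entropyNumber n A :=
  Real.sInf_nonneg fun _ hε => hε.1.le

theorem le_mul_entropyNumber_of_forall_le {X : Type*} [NormedAddCommGroup X] {A : Set X}
    (hA : Bornology.IsBounded A) {n : ℕ} {a c : ℝ} (hc : 0 ≤ c)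
    (h : ∀ ε > 0, ∀ x : Fin (2 ^ n) → X, A ⊆ ⋃ i, Metric.closedBall (x i) ε → a ≤ c * ε) :
    a ≤ c * entropyNumber n A := by
  obtain ⟨R, hR, hAR⟩ := hA.exists_pos_norm_le
  have cover_zero : A ⊆ ⋃ _ : Fin (2 ^ n), Metric.closedBall 0 R := fun x hx =>
    mem_iUnion.2 ⟨0, mem_closedBall_zero_iff.2 (hAR x hx)⟩
  rcases hc.eq_or_lt with rfl | hc
  · simpa using h R hR _ cover_zero
  rw [← div_le_iff₀' hc]
  refine le_csInf ⟨R, hR, _, cover_zero⟩ fun ε ⟨hε, x, hx⟩ => ?_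
  exact (div_le_iff₀' hc).2 (h ε hε x hx)

theorem le_mul_rpow_of_crossPolytope_subset {E X : Type*} [NormedAddCommGroup E]
    [InnerProductSpace ℝ E] [FiniteDimensional ℝ E] [NormedAddCommGroup X] [NormedSpace ℝ X]
    {n : ℕ} [NeZero n] (hE : Module.finrank ℝ E = n) {f : Fin n → X}
    (T : Submodule.span ℝ (range f) ≃L[ℝ] E) {s : ℝ} (hs : 0 ≤ s)
    (hf : ∀ i, s ≤ Metric.infDist (f i) (Submodule.span ℝ (f '' Iio i))) {x : Fin (2 ^ n) → X}
    {ε : ℝ} (hε : 0 ≤ ε) (hx : crossPolytope f ⊆ ⋃ j, Metric.closedBall (x j) ε) :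
    s ≤ ‖(T : Submodule.span ℝ (range f) →L[ℝ] E)‖ *
        ‖(T.symm : E →L[ℝ] Submodule.span ℝ (range f))‖ *
      (n.factorial * unitBallVol n) ^ (n : ℝ)⁻¹ * ε := by
  have hV := unitBallVol_pos n
  refine le_of_pow_le_pow_left₀ (NeZero.ne n) (by positivity) ?_
  calc s ^ n = ∏ _i : Fin n, s := by simp
    _ ≤ ∏ i, Metric.infDist (f i) (Submodule.span ℝ (f '' Iio i)) :=
        Finset.prod_le_prod (fun _ _ => hs) fun i _ => hf i
    _ ≤ _ := prod_infDist_le_of_crossPolytope_subset hE T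
        (fun i => Submodule.subset_span (mem_range_self i)) hε hx
    _ = _ := by
        simp only [mul_pow]
        rw [Real.rpow_inv_natCast_pow (by positivity) (NeZero.ne n)]
        ring

theorem kolmogorovWidth_le_entropy_banach_general
    {X : Type*} [NormedAddCommGroup X] [NormedSpace ℝ X]
    (K : Set X) (hK : Bornology.IsBounded K) (n : ℕ) (hn : 1 ≤ n) (δ : ℝ) (hδ : 0 ≤ δ)
    (hBM : ∀ Y : Submodule ℝ X, FiniteDimensional ℝ Y → Module.finrank ℝ Y = n →
      ∃ T : Y ≃L[ℝ] EuclideanSpace ℝ (Fin n),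
        ‖(T : Y →L[ℝ] EuclideanSpace ℝ (Fin n))‖ *
          ‖(T.symm : EuclideanSpace ℝ (Fin n) →L[ℝ] Y)‖ ≤ δ) :
    kolmogorovWidth n K
      ≤ δ * ((n.factorial : ℝ) * unitBallVol n) ^ ((n : ℝ)⁻¹) *
          entropyNumber n (symConvexHull K) := by
  have : NeZero n := ⟨by lia⟩
  have hV := unitBallVol_pos n
  refine le_of_forall_lt_imp_le_of_dense fun s hs => ?_
  rcases lt_or_ge s 0 with hs₀ | hs₀
  · exact hs₀.le.trans (mul_nonneg (by positivity) (entropyNumber_nonneg _ _))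
  obtain ⟨f, hf⟩ := exists_forall_lt_infDist_of_lt_kolmogorovWidth hs₀ hs
  have f_linearIndependent : LinearIndependent ℝ f :=
    linearIndependent_of_forall_notMem_span_image_Iio fun i hi =>
      (hs₀.trans_lt (hf i).2).ne' (Metric.infDist_zero_of_mem hi)
  obtain ⟨T, hT⟩ := hBM (Submodule.span ℝ (range f))
    (FiniteDimensional.span_of_finite ℝ (finite_range f))
    (by simpa using finrank_span_eq_card f_linearIndependent)
  refine le_mul_entropyNumber_of_forall_le (isBounded_symConvexHull hK) (by positivity)
    fun ε hε x hx => ?_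
  refine (le_mul_rpow_of_crossPolytope_subset finrank_euclideanSpace_fin T hs₀
    (fun i => (hf i).2.le) hε.le
    ((crossPolytope_subset_symConvexHull fun i => (hf i).1).trans hx)).trans ?_
  gcongr

/-- Kolmogorov width vs entropy numbers in Banach spaces
(Corollary 3.1 of the paper). -/
theorem kolmogorovWidth_le_entropy_banach
    {X : Type*} [NormedAddCommGroup X] [NormedSpace ℝ X] [CompleteSpace X]
    (K : Set X) (hK : IsCompact K) (n : ℕ) (hn : 1 ≤ n) (δ : ℝ) (hδ : 1 ≤ δ)
    (hBM : ∀ Y : Submodule ℝ X, FiniteDimensional ℝ Y → Module.finrank ℝ Y = n →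
      ∃ T : Y ≃L[ℝ] EuclideanSpace ℝ (Fin n),
        ‖(T : Y →L[ℝ] EuclideanSpace ℝ (Fin n))‖ *
          ‖(T.symm : EuclideanSpace ℝ (Fin n) →L[ℝ] Y)‖ ≤ δ) :
    kolmogorovWidth n K
      ≤ δ * ((n.factorial : ℝ) * unitBallVol n) ^ ((n : ℝ)⁻¹) *
          entropyNumber n (symConvexHull K) :=
  kolmogorovWidth_le_entropy_banach_general K hK.isBounded n hn δ (zero_le_one.trans hδ) hBM
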